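/- Let x ∈ ℝ^d be a fixed vector and let L be the random sketch map defined from h and s. Then E[ ‖Lx‖₂² ] = ‖x‖₂² and Var( ‖Lx‖₂² ) = (2/t)·(‖x‖₂⁴ − ‖x‖₄⁴). -/

import Mathlib

/-!
Expanding the squares and using `s j ^ 2 = 1`, the diagonal terms of `‖Lx‖²` add up to `‖x‖²`, so
`‖Lx‖² - ‖x‖² = ∑_{j ≠ k} [h j = h k] · s j s k · x j x k` (`sketch_sq_sub`).
Since `h` and `s` are independent, expectations of this sum and of its square split termwise into a
collision factor and a sign factor. A product of signs over a nonempty set of at most four indices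
has mean zero (`integral_prod_signs`), so every term of the mean vanishes, and in the second moment
the pairs `(j, k)`, `(l, m)` contribute only if they are equal or swapped (`integral_signs_four`).
For these the collision factor is `P(h j = h k) = 1 / t` (`integral_collision`), and the second
moment is `(2 / t) ∑_{j ≠ k} x j ^ 2 x k ^ 2 = (2 / t) (‖x‖₂⁴ - ‖x‖₄⁴)`.
-/

open MeasureTheory ProbabilityTheory
open scoped ENNReal BigOperators

/-- `h : [d] → [t]` is a pairwise independent uniform random function: for every set of at
most two indices, the corresponding values are independent and uniform on `[t]`. -/
def PairwiseUniform {Ω : Type*} [MeasurableSpace Ω] (μ : Measure Ω) {d t : ℕ}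
    (h : Ω → Fin d → Fin t) : Prop :=
  ∀ J : Finset (Fin d), J.card ≤ 2 → ∀ a : Fin d → Fin t,
    μ {ω | ∀ j ∈ J, h ω j = a j} = ((t : ℝ≥0∞))⁻¹ ^ J.card

/-- `s : [d] → {−1, +1}` is a 4-wise independent random sign function: it takes values in
`{−1, +1}`, and for every set of at most four indices the corresponding values are
independent and uniform on `{−1, +1}`. -/
def FourWiseSigns {Ω : Type*} [MeasurableSpace Ω] (μ : Measure Ω) {d : ℕ}
    (s : Ω → Fin d → ℝ) : Prop :=
  (∀ ω j, s ω j = 1 ∨ s ω j = -1) ∧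
  ∀ J : Finset (Fin d), J.card ≤ 4 → ∀ e : Fin d → ℝ, (∀ j, e j = 1 ∨ e j = -1) →
    μ {ω | ∀ j ∈ J, s ω j = e j} = (2 : ℝ≥0∞)⁻¹ ^ J.card

/-- The sketch map: `(Lx)_i = Σ_{j : h(j) = i} s(j)·x_j`. -/
noncomputable def sketch {d t : ℕ} (h : Fin d → Fin t) (s : Fin d → ℝ)
    (x : Fin d → ℝ) (i : Fin t) : ℝ :=
  ∑ j, if h j = i then s j * x j else 0

/-- A product of signs over a nonempty set of at most four indices has mean zero: sorting by the
set `T` of indices carrying the sign `-1`, the mean is `2 ^ (-|J|) ∑_{T ⊆ J} (-1) ^ |T| = 0`. -/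
lemma integral_prod_signs {Ω : Type*} [MeasurableSpace Ω] (μ : Measure Ω)
    [IsProbabilityMeasure μ] {d : ℕ} (s : Ω → Fin d → ℝ) (hms : Measurable s)
    (hfs : FourWiseSigns μ s) (J : Finset (Fin d)) (hJ : J.Nonempty) (hJ4 : J.card ≤ 4) :
    ∫ ω, ∏ j ∈ J, s ω j ∂μ = 0 := by
  classical
  set e : Finset (Fin d) → Fin d → ℝ := fun T j => if j ∈ T then -1 else 1 with he
  set A : Finset (Fin d) → Set Ω := fun T => {ω | ∀ j ∈ J, s ω j = e T j} with hA
  have hAm : ∀ T, MeasurableSet (A T) := by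
    intro T
    have : A T = ⋂ j ∈ J, (fun ω => s ω j) ⁻¹' {e T j} := by
      ext ω; simp [hA]
    rw [this]
    exact Finset.measurableSet_biInter _ fun j _ =>
      ((measurable_pi_apply j).comp hms) (measurableSet_singleton _)
  have hpt : ∀ ω, ∏ j ∈ J, s ω j
      = ∑ T ∈ J.powerset, (A T).indicator (fun _ => ((-1 : ℝ)) ^ T.card) ω := by
    intro ω
    have hsign := hfs.1 ω
    rw [Finset.sum_eq_single (J.filter fun j => s ω j = -1)]
    · have hmem : ω ∈ A (J.filter fun j => s ω j = -1) := by
        intro j hj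
        simp only [he, Finset.mem_filter, hj, true_and]
        split_ifs with h1
        · exact h1
        · exact (hsign j).resolve_right h1
      rw [Set.indicator_of_mem hmem, Finset.prod_congr rfl hmem]
      simp only [he, Finset.prod_ite, Finset.prod_const, one_pow, mul_one]
      congr 2
      ext j; simp +contextual
    · intro T hT hne
      apply Set.indicator_of_notMem
      intro hmem
      apply hne
      ext j
      rw [Finset.mem_filter]
      rw [Finset.mem_powerset] at hT
      constructor
      · intro hj
        refine ⟨hT hj, ?_⟩
        rw [hmem j (hT hj)]; simp [he, hj]
      · rintro ⟨hj, hsj⟩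
        by_contra hjT
        have := hmem j hj
        simp only [he, hjT, if_false] at this
        rw [hsj] at this
        norm_num at this
    · intro hnot
      exact absurd (Finset.mem_powerset.2 (Finset.filter_subset _ _)) hnot
  simp_rw [hpt]
  rw [integral_finsetSum _ fun T _ => (integrable_const _).indicator (hAm T)]
  have hint : ∀ T ∈ J.powerset, ∫ ω, (A T).indicator (fun _ => ((-1 : ℝ)) ^ T.card) ω ∂μ
      = ((2 : ℝ)⁻¹) ^ J.card * (-1) ^ T.card := by
    intro T _
    have hμ : μ (A T) = (2 : ℝ≥0∞)⁻¹ ^ J.card :=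
      hfs.2 J hJ4 (e T) fun j => by
        by_cases hj : j ∈ T <;> simp [he, hj]
    rw [integral_indicator_const _ (hAm T), measureReal_def, hμ]
    simp
  rw [Finset.sum_congr rfl hint, ← Finset.mul_sum]
  have h0 := Finset.sum_powerset_neg_one_pow_card_of_nonempty hJ
  have h1 : ∑ T ∈ J.powerset, ((-1 : ℝ)) ^ T.card = 0 := by exact_mod_cast h0
  rw [h1, mul_zero]

lemma integral_signs_two {Ω : Type*} [MeasurableSpace Ω] (μ : Measure Ω)
    [IsProbabilityMeasure μ] {d : ℕ} (s : Ω → Fin d → ℝ) (hms : Measurable s)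
    (hfs : FourWiseSigns μ s) {j k : Fin d} (hjk : j ≠ k) :
    ∫ ω, s ω j * s ω k ∂μ = 0 := by
  have := integral_prod_signs μ s hms hfs {j, k} (by simp) (by simp [Finset.card_pair hjk])
  simpa [Finset.prod_pair hjk] using this

/-- For distinct `p.1, p.2` and distinct `q.1, q.2`, the fourth moment is `1` when `q` equals `p` or
its swap, and `0` otherwise; the two events exclude each other, so the value is a sum of two
indicators. -/
lemma integral_signs_four {Ω : Type*} [MeasurableSpace Ω] (μ : Measure Ω)
    [IsProbabilityMeasure μ] {d : ℕ} (s : Ω → Fin d → ℝ) (hms : Measurable s)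
    (hfs : FourWiseSigns μ s) (p q : Fin d × Fin d) (hp : p.1 ≠ p.2) (hq : q.1 ≠ q.2) :
    ∫ ω, (s ω p.1 * s ω p.2) * (s ω q.1 * s ω q.2) ∂μ
      = (if q = p then 1 else 0) + (if q = p.swap then 1 else 0) := by
  obtain ⟨j, k⟩ := p
  obtain ⟨l, m⟩ := q
  simp only [Prod.swap, Prod.mk.injEq] at *
  have hsq : ∀ ω i, s ω i * s ω i = 1 := by
    intro ω i
    rcases hfs.1 ω i with h | h <;> simp [h]
  -- A shared index cancels, leaving a product of at most two signs.
  by_cases hlj : l = j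
  · subst hlj
    have e1 : ∀ ω, s ω l * s ω k * (s ω l * s ω m) = s ω k * s ω m := fun ω => by
      linear_combination (s ω k * s ω m) * hsq ω l
    simp_rw [e1]
    by_cases hmk : m = k
    · subst hmk
      simp [hsq, hp]
    · rw [integral_signs_two μ s hms hfs (Ne.symm hmk)]
      simp [hmk, hp]
  by_cases hlk : l = k
  · subst hlk
    have e1 : ∀ ω, s ω j * s ω l * (s ω l * s ω m) = s ω j * s ω m := fun ω => by
      linear_combination (s ω j * s ω m) * hsq ω l
    simp_rw [e1]
    by_cases hmj : m = j
    · subst hmj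
      simp [hsq, hlj]
    · rw [integral_signs_two μ s hms hfs (Ne.symm hmj)]
      simp [hmj, hlj]
  simp only [hlj, hlk, false_and, if_false, add_zero]
  by_cases hmj : m = j
  · subst hmj
    have e1 : ∀ ω, s ω m * s ω k * (s ω l * s ω m) = s ω k * s ω l := fun ω => by
      linear_combination (s ω k * s ω l) * hsq ω m
    simp_rw [e1]
    exact integral_signs_two μ s hms hfs (Ne.symm hlk)
  by_cases hmk : m = k
  · subst hmk
    have e1 : ∀ ω, s ω j * s ω m * (s ω l * s ω m) = s ω j * s ω l := fun ω => by
      linear_combination (s ω j * s ω l) * hsq ω m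
    simp_rw [e1]
    exact integral_signs_two μ s hms hfs (Ne.symm hlj)
  have := integral_prod_signs μ s hms hfs {j, k, l, m} (by simp) Finset.card_le_four
  rw [← this]
  congr 1
  ext ω
  rw [Finset.prod_insert (by simp [hp, Ne.symm hlj, Ne.symm hmj]),
    Finset.prod_insert (by simp [Ne.symm hlk, Ne.symm hmk]), Finset.prod_pair hq]
  ring

/-- Two distinct indices collide under `h` with probability `1 / t`. -/
lemma integral_collision {Ω : Type*} [MeasurableSpace Ω] (μ : Measure Ω)
    [IsProbabilityMeasure μ] {d t : ℕ} (ht : 0 < t) (h : Ω → Fin d → Fin t) (hmh : Measurable h)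
    (hph : PairwiseUniform μ h) {j k : Fin d} (hjk : j ≠ k) :
    ∫ ω, (if h ω j = h ω k then (1 : ℝ) else 0) ∂μ = 1 / t := by
  set A : Fin t → Set Ω := fun a => {ω | ∀ i ∈ ({j, k} : Finset (Fin d)), h ω i = a} with hA
  have hAm : ∀ a, MeasurableSet (A a) := fun a =>
    hmh (MeasurableSet.of_discrete
      (s := {g : Fin d → Fin t | ∀ i ∈ ({j, k} : Finset (Fin d)), g i = a}))
  have hpt : ∀ ω, (if h ω j = h ω k then (1 : ℝ) else 0)
      = ∑ a, (A a).indicator (fun _ => (1 : ℝ)) ω := by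
    intro ω
    simp only [hA, Set.indicator_apply, Set.mem_ofPred_eq, Finset.mem_insert, Finset.mem_singleton,
      forall_eq_or_imp, forall_eq]
    rw [Finset.sum_eq_single (h ω j)]
    · simp [eq_comm]
    · intro b _ hb
      simp [Ne.symm hb]
    · simp
  simp_rw [hpt]
  rw [integral_finsetSum _ fun a _ => (integrable_const _).indicator (hAm a)]
  have hint : ∀ a, ∫ ω, (A a).indicator (fun _ => (1 : ℝ)) ω ∂μ = ((t : ℝ)⁻¹) ^ 2 := by
    intro a
    have hμ : μ (A a) = (t : ℝ≥0∞)⁻¹ ^ ({j, k} : Finset (Fin d)).card :=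
      hph {j, k} (by simp [Finset.card_pair hjk]) fun _ => a
    rw [Finset.card_pair hjk] at hμ
    rw [integral_indicator_const _ (hAm a), measureReal_def, hμ]
    simp
  simp_rw [hint]
  have : (t : ℝ) ≠ 0 := by positivity
  simp
  field_simp

lemma sketch_sq_sub {d t : ℕ} (h : Fin d → Fin t) (s x : Fin d → ℝ)
    (hs : ∀ j, s j = 1 ∨ s j = -1) :
    ∑ i, sketch h s x i ^ 2 - ∑ j, x j ^ 2
      = ∑ p ∈ (Finset.univ : Finset (Fin d)).offDiag, (x p.1 * x p.2) *
          ((if h p.1 = h p.2 then 1 else 0) * (s p.1 * s p.2)) := by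
  set f : Fin d × Fin d → ℝ := fun p => (x p.1 * x p.2) *
          ((if h p.1 = h p.2 then 1 else 0) * (s p.1 * s p.2)) with hf
  have h1 : ∑ i, sketch h s x i ^ 2 = ∑ p ∈ Finset.univ ×ˢ Finset.univ, f p := by
    simp only [sketch, sq, Finset.sum_mul_sum]
    rw [Finset.sum_comm, Finset.sum_product]
    refine Finset.sum_congr rfl fun j _ => ?_
    rw [Finset.sum_comm]
    refine Finset.sum_congr rfl fun k _ => ?_
    rw [Finset.sum_eq_single (h j)]
    · simp only [hf, if_true, eq_comm (a := h k)]
      split_ifs <;> ring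
    · intro b _ hb
      simp [Ne.symm hb]
    · simp
  have h2 : ∑ j, x j ^ 2 = ∑ p ∈ (Finset.univ : Finset (Fin d)).diag, f p := by
    rw [Finset.sum_diag]
    refine Finset.sum_congr rfl fun j _ => ?_
    rcases hs j with h | h <;> simp [hf, h] <;> ring
  rw [h1, h2, ← Finset.diag_union_offDiag,
    Finset.sum_union (Finset.disjoint_diag_offDiag _), add_sub_cancel_left]


/-- For a fixed `x ∈ ℝ^d` and the random sketch map `L` defined from `h` and `s`:
`E[‖Lx‖₂²] = ‖x‖₂²` and `Var(‖Lx‖₂²) = (2/t)·(‖x‖₂⁴ − ‖x‖₄⁴)`. -/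
theorem sketch_norm_mean_variance {Ω : Type*} [MeasurableSpace Ω] (μ : Measure Ω)
    [IsProbabilityMeasure μ] {d t : ℕ} (hd : 0 < d) (ht : 0 < t)
    (h : Ω → Fin d → Fin t) (s : Ω → Fin d → ℝ)
    (hmh : Measurable h) (hms : Measurable s)
    (hph : PairwiseUniform μ h) (hfs : FourWiseSigns μ s)
    (hhs : IndepFun h s μ)
    (x : Fin d → ℝ) :
    (∫ ω, ∑ i, (sketch (h ω) (s ω) x i) ^ 2 ∂μ = ∑ j, x j ^ 2) ∧
    (∫ ω, (∑ i, (sketch (h ω) (s ω) x i) ^ 2 - ∑ j, x j ^ 2) ^ 2 ∂μ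
      = 2 / (t : ℝ) * ((∑ j, x j ^ 2) ^ 2 - ∑ j, x j ^ 4)) := by
  classical
  set O := (Finset.univ : Finset (Fin d)).offDiag with hO
  set C : Fin d × Fin d → Ω → ℝ := fun p ω => if h ω p.1 = h ω p.2 then 1 else 0 with hC
  set S : Fin d × Fin d → Ω → ℝ := fun p ω => s ω p.1 * s ω p.2 with hS
  have hne : ∀ p ∈ O, p.1 ≠ p.2 := fun p hp => (Finset.mem_offDiag.1 hp).2.2
  have hexp : ∀ ω, ∑ i, sketch (h ω) (s ω) x i ^ 2 - ∑ j, x j ^ 2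
      = ∑ p ∈ O, (x p.1 * x p.2) * (C p ω * S p ω) :=
    fun ω => sketch_sq_sub (h ω) (s ω) x (hfs.1 ω)
  have hCm : ∀ p, Measurable (C p) := fun p =>
    (Measurable.of_discrete (f := fun g : Fin d → Fin t =>
      if g p.1 = g p.2 then (1 : ℝ) else 0)).comp hmh
  have hSm : ∀ p, Measurable (S p) := fun p =>
    ((measurable_pi_apply p.1).comp hms).mul ((measurable_pi_apply p.2).comp hms)
  have hCb : ∀ p ω, |C p ω| ≤ 1 := by
    intro p ω
    simp only [hC]
    split_ifs <;> simp
  have hSb : ∀ p ω, |S p ω| ≤ 1 := by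
    intro p ω
    rcases hfs.1 ω p.1 with h1 | h1 <;> rcases hfs.1 ω p.2 with h2 | h2 <;> simp [hS, h1, h2]
  have hCSb : ∀ p ω, |C p ω * S p ω| ≤ 1 := by
    intro p ω
    rw [abs_mul]
    exact mul_le_one₀ (hCb p ω) (abs_nonneg _) (hSb p ω)
  have hint1 : ∀ p, Integrable (fun ω => C p ω * S p ω) μ := fun p =>
    Integrable.of_bound ((hCm p).mul (hSm p)).aestronglyMeasurable 1
      (Filter.Eventually.of_forall fun ω => hCSb p ω)
  have hint2 : ∀ p q, Integrable (fun ω => (C p ω * C q ω) * (S p ω * S q ω)) μ := by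
    intro p q
    refine Integrable.of_bound
      (((hCm p).mul (hCm q)).mul ((hSm p).mul (hSm q))).aestronglyMeasurable 1
      (Filter.Eventually.of_forall fun ω => ?_)
    rw [Real.norm_eq_abs, mul_mul_mul_comm, abs_mul]
    exact mul_le_one₀ (hCSb p ω) (abs_nonneg _) (hCSb q ω)
  -- Independence of `h` and `s` separates collision factors from sign factors.
  have hsplit : ∀ (φ : (Fin d → Fin t) → ℝ) (ψ : (Fin d → ℝ) → ℝ), Measurable ψ →
      ∫ ω, φ (h ω) * ψ (s ω) ∂μ = (∫ ω, φ (h ω) ∂μ) * ∫ ω, ψ (s ω) ∂μ := by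
    intro φ ψ hψ
    have hφ : Measurable φ := Measurable.of_discrete
    exact (hhs.comp hφ hψ).integral_fun_mul_eq_mul_integral
      (hφ.comp hmh).aestronglyMeasurable (hψ.comp hms).aestronglyMeasurable
  constructor
  · have hN : ∀ ω, ∑ i, sketch (h ω) (s ω) x i ^ 2
        = ∑ j, x j ^ 2 + ∑ p ∈ O, (x p.1 * x p.2) * (C p ω * S p ω) := fun ω => by
      rw [← hexp ω]; ring
    simp_rw [hN]
    rw [integral_add (integrable_const _)
      (integrable_finsetSum _ fun p _ => (hint1 p).const_mul _),
      integral_finsetSum _ fun p _ => (hint1 p).const_mul _]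
    rw [Finset.sum_eq_zero (s := O)]
    · simp
    · intro p hp
      rw [integral_const_mul]
      have h1 := hsplit (fun g => if g p.1 = g p.2 then 1 else 0) (fun g => g p.1 * g p.2)
        (by fun_prop)
      rw [integral_signs_two μ s hms hfs (hne p hp), mul_zero] at h1
      rw [h1, mul_zero]
  · have hsq : ∀ ω, (∑ i, sketch (h ω) (s ω) x i ^ 2 - ∑ j, x j ^ 2) ^ 2
        = ∑ p ∈ O, ∑ q ∈ O, ((x p.1 * x p.2) * (x q.1 * x q.2)) *
            ((C p ω * C q ω) * (S p ω * S q ω)) := by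
      intro ω
      rw [hexp ω, sq, Finset.sum_mul_sum]
      refine Finset.sum_congr rfl fun p _ => Finset.sum_congr rfl fun q _ => ?_
      ring
    simp_rw [hsq]
    rw [integral_finsetSum _ fun p _ =>
      integrable_finsetSum _ fun q _ => (hint2 p q).const_mul _]
    have hterm : ∀ p ∈ O, ∫ ω, ∑ q ∈ O, ((x p.1 * x p.2) * (x q.1 * x q.2)) *
        ((C p ω * C q ω) * (S p ω * S q ω)) ∂μ = 2 / (t : ℝ) * (x p.1 ^ 2 * x p.2 ^ 2) := by
      intro p hp
      rw [integral_finsetSum _ fun q _ => (hint2 p q).const_mul _]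
      have hpc : ∀ q ∈ O, ∫ ω, ((x p.1 * x p.2) * (x q.1 * x q.2)) *
          ((C p ω * C q ω) * (S p ω * S q ω)) ∂μ
          = (if q = p then (x p.1 * x p.2) * (x q.1 * x q.2) * ∫ ω, C p ω * C q ω ∂μ else 0)
            + (if q = p.swap then
                (x p.1 * x p.2) * (x q.1 * x q.2) * ∫ ω, C p ω * C q ω ∂μ else 0) := by
        intro q hq
        rw [integral_const_mul]
        have h1 := hsplit
          (fun g => (if g p.1 = g p.2 then 1 else 0) * (if g q.1 = g q.2 then 1 else 0))
          (fun g => (g p.1 * g p.2) * (g q.1 * g q.2)) (by fun_prop)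
        rw [integral_signs_four μ s hms hfs p q (hne p hp) (hne q hq)] at h1
        rw [h1]
        simp only [hC]
        split_ifs <;> ring
      have hswap : p.swap ∈ O := by
        simpa [hO] using (hne p hp).symm
      have hCC : ∀ ω, C p ω * C p ω = C p ω := by
        intro ω; simp [hC]
      have hCC' : ∀ ω, C p ω * C p.swap ω = C p ω := by
        intro ω
        simp only [hC, Prod.fst_swap, Prod.snd_swap, eq_comm (a := h ω p.2)]
        split_ifs <;> simp
      rw [Finset.sum_congr rfl hpc, Finset.sum_add_distrib, Finset.sum_ite_eq_of_mem' _ _ _ hp,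
        Finset.sum_ite_eq_of_mem' _ _ _ hswap]
      simp_rw [hCC, hCC']
      rw [integral_collision μ ht h hmh hph (hne p hp)]
      simp only [Prod.fst_swap, Prod.snd_swap]
      ring
    rw [Finset.sum_congr rfl hterm, ← Finset.mul_sum]
    congr 1
    have hfull : (∑ j, x j ^ 2) ^ 2
        = ∑ p ∈ (Finset.univ : Finset (Fin d)) ×ˢ Finset.univ, x p.1 ^ 2 * x p.2 ^ 2 := by
      rw [sq, Finset.sum_mul_sum, Finset.sum_product]
    rw [hfull, ← Finset.diag_union_offDiag,
      Finset.sum_union (Finset.disjoint_diag_offDiag _), Finset.sum_diag]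
    have : ∀ j, x j ^ 2 * x j ^ 2 = x j ^ 4 := fun j => by ring
    simp only [this, hO]
    ring
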